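/- The linear map (X̂, Ŷ) ↦ Â(X̂) + B̂(Ŷ) from S^{n+1} × S^{n+1} to ℝ^{ñ₁} is surjective; i.e., { Â(X̂) + B̂(Ŷ) : X̂, Ŷ ∈ S^{n+1} } = ℝ^{ñ₁}. -/

import Mathlib

open Matrix BigOperators

noncomputable section

/-- Real square matrices of size `k`. -/
abbrev Mat (k : ℕ) : Type := Matrix (Fin k) (Fin k) ℝ

/-- `dgE P q` is the block-diagonal `(n+1) × (n+1)` matrix `diag(P, q)`. -/
def dgE {n : ℕ} (P : Mat n) (q : ℝ) : Mat (n + 1) :=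
  Matrix.of fun i j =>
    if hi : (i : ℕ) < n then
      (if hj : (j : ℕ) < n then P ⟨i, hi⟩ ⟨j, hj⟩ else 0)
    else (if (j : ℕ) < n then 0 else q)

/-- Index type for `ℝ^{ñ₁}`, split as the first `m` coordinates, the next `n`
coordinates, and the last `ñ+1−m` (here `k`) coordinates; `ñ₁ = m + n + (ñ+1−m)`. -/
abbrev SIdx (n m k : ℕ) : Type := Fin m ⊕ Fin n ⊕ Fin k

/-- The linear map `Â : S^{n+1} → ℝ^{ñ₁}` of the sSDLCP. -/
def Ahat {n m k : ℕ} (A : Fin m → Mat n) (b : Fin m → ℝ) (Xh : Mat (n + 1)) :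
    SIdx n m k → ℝ
  | Sum.inl i => (dgE (A i) (-(b i)) * Xh).trace
  | Sum.inr (Sum.inl i) => Xh i.castSucc (Fin.last n)
  | Sum.inr (Sum.inr _) => 0

/-- The linear map `B̂ : S^{n+1} → ℝ^{ñ₁}` of the sSDLCP, where `dd` is the vector `d`. -/
def Bhat {n m k : ℕ} (B : Fin k → Mat n) (dd : Fin k → ℝ) (Yh : Mat (n + 1)) :
    SIdx n m k → ℝ
  | Sum.inl _ => 0
  | Sum.inr (Sum.inl _) => 0
  | Sum.inr (Sum.inr j) => (dgE (B j) (dd j) * Yh).trace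

/-!
A linearly independent family of symmetric matrices can be given arbitrary trace pairings with one
symmetric matrix: any matrix realising them may be replaced by its symmetric part. The block
matrices `diag(A_i, -b_i)` are independent because their upper left blocks are, so `X̂` realises the
first `m` coordinates; as they do not see the border of `X̂`, the next `n` coordinates can then be
prescribed freely. The family `diag(B_j, d_j)` is independent because `diag(B_1, d_1)` is its only
member with a nonzero corner entry, so `Ŷ` realises the remaining coordinates.
-/

section LinearIndependence

variable {ι K V W : Type*} [DivisionRing K] [AddCommGroup V] [Module K V]
  [AddCommGroup W] [Module K W]

theorem exists_linearMap_apply_eq_of_linearIndependent {v : ι → V} (hv : LinearIndependent K v)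
    (w : ι → W) : ∃ f : V →ₗ[K] W, ∀ i, f (v i) = w i := by
  obtain ⟨g, hg⟩ := (Finsupp.linearCombination K v).exists_leftInverse_of_injective
    (linearIndependent_iff_ker.mp hv)
  refine ⟨Finsupp.linearCombination K w ∘ₗ g, fun i => ?_⟩
  have hgi : g (v i) = Finsupp.single i 1 := by
    simpa using LinearMap.congr_fun hg (Finsupp.single i 1)
  simp [hgi]

theorem linearIndependent_of_apply_eq_zero_of_ne {v : ι → V} {i₀ : ι}
    (hv : LinearIndependent K fun i : {i // i ≠ i₀} => v i) (f : V →ₗ[K] W)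
    (h₀ : f (v i₀) ≠ 0) (hne : ∀ i ≠ i₀, f (v i) = 0) : LinearIndependent K v := by
  classical
  have hspan : Submodule.span K (Set.range fun i : {i // i ≠ i₀} => v i) ≤ LinearMap.ker f :=
    Submodule.span_le.mpr (Set.range_subset_iff.mpr fun i => hne i i.2)
  rw [← linearIndependent_equiv (Equiv.optionSubtypeNe i₀), linearIndependent_option]
  exact ⟨by simpa [Function.comp_def] using hv,
    fun hmem => h₀ (hspan (by simpa [Function.comp_def] using hmem))⟩

end LinearIndependence

section TracePairing

variable {m n : Type*} [Fintype m] [Fintype n]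

theorem exists_forall_apply_eq_trace_mul {R : Type*} [CommSemiring R]
    (f : Matrix m n R →ₗ[R] R) : ∃ X : Matrix n m R, ∀ M, f M = (M * X).trace := by
  classical
  refine ⟨of fun j i => f (single i j 1), fun M => ?_⟩
  conv_lhs => rw [matrix_eq_sum_single M]
  simp only [map_sum, trace, diag_apply, mul_apply, of_apply]
  refine Finset.sum_congr rfl fun i _ => Finset.sum_congr rfl fun j _ => ?_
  rw [← smul_eq_mul, ← map_smul, smul_single, smul_eq_mul, mul_one]

theorem exists_trace_mul_eq_of_linearIndependent {ι K : Type*} [Field K] {C : ι → Matrix m n K}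
    (hC : LinearIndependent K C) (r : ι → K) :
    ∃ X : Matrix n m K, ∀ i, (C i * X).trace = r i := by
  obtain ⟨f, hf⟩ := exists_linearMap_apply_eq_of_linearIndependent hC r
  obtain ⟨X, hX⟩ := exists_forall_apply_eq_trace_mul f
  exact ⟨X, fun i => by rw [← hX, hf]⟩

theorem trace_mul_transpose_of_isSymm {R : Type*} [CommSemiring R] {P : Matrix n n R}
    (hP : P.IsSymm) (X : Matrix n n R) : (P * Xᵀ).trace = (P * X).trace := by
  rw [← trace_transpose_mul, transpose_transpose, hP.eq]

theorem exists_isSymm_trace_mul_eq {ι K : Type*} [Field K] [NeZero (2 : K)]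
    {C : ι → Matrix n n K} (hsymm : ∀ i, (C i).IsSymm) (hC : LinearIndependent K C) (r : ι → K) :
    ∃ X : Matrix n n K, X.IsSymm ∧ ∀ i, (C i * X).trace = r i := by
  obtain ⟨X, hX⟩ := exists_trace_mul_eq_of_linearIndependent hC r
  refine ⟨(2⁻¹ : K) • (X + Xᵀ), (isSymm_add_transpose_self X).smul _, fun i => ?_⟩
  rw [mul_smul_comm, trace_smul, mul_add, trace_add, trace_mul_transpose_of_isSymm (hsymm i), hX,
    ← two_mul, smul_eq_mul, inv_mul_cancel_left₀ two_ne_zero]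

end TracePairing

section BlockDiagonal

variable {n : ℕ}

theorem dgE_castSucc_castSucc (P : Mat n) (q : ℝ) (i j : Fin n) :
    dgE P q i.castSucc j.castSucc = P i j := by
  simp [dgE]

theorem dgE_castSucc_last (P : Mat n) (q : ℝ) (i : Fin n) :
    dgE P q i.castSucc (Fin.last n) = 0 := by
  simp [dgE]

theorem dgE_last_castSucc (P : Mat n) (q : ℝ) (j : Fin n) :
    dgE P q (Fin.last n) j.castSucc = 0 := by
  simp [dgE]

theorem dgE_last_last (P : Mat n) (q : ℝ) : dgE P q (Fin.last n) (Fin.last n) = q := by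
  simp [dgE]

theorem isSymm_dgE {P : Mat n} (hP : P.IsSymm) (q : ℝ) : (dgE P q).IsSymm := by
  refine IsSymm.ext fun i j => ?_
  cases i using Fin.lastCases <;> cases j using Fin.lastCases <;>
    simp only [dgE_castSucc_castSucc, dgE_castSucc_last, dgE_last_castSucc, hP.apply]

theorem trace_dgE_mul (P : Mat n) (q : ℝ) (X : Mat (n + 1)) :
    (dgE P q * X).trace =
      (P * X.submatrix Fin.castSucc Fin.castSucc).trace + q * X (Fin.last n) (Fin.last n) := by
  simp only [trace, diag_apply, mul_apply, Fin.sum_univ_castSucc, dgE_castSucc_castSucc,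
    dgE_castSucc_last, dgE_last_castSucc, dgE_last_last, submatrix_apply, zero_mul, add_zero,
    Finset.sum_const_zero, zero_add]

theorem linearIndependent_dgE {ι : Type*} {P : ι → Mat n} (hP : LinearIndependent ℝ P)
    (q : ι → ℝ) : LinearIndependent ℝ fun i => dgE (P i) (q i) := by
  let upperLeft : Mat (n + 1) →ₗ[ℝ] Mat n :=
    { toFun := fun X => X.submatrix Fin.castSucc Fin.castSucc
      map_add' := fun _ _ => rfl
      map_smul' := fun _ _ => rfl }
  have hupperLeft : upperLeft ∘ (fun i => dgE (P i) (q i)) = P :=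
    funext fun i => Matrix.ext (dgE_castSucc_castSucc (P i) (q i))
  exact .of_comp upperLeft (by rwa [hupperLeft])

theorem linearIndependent_dgE_of_corner_eq_zero_of_ne {ι : Type*} {P : ι → Mat n} {q : ι → ℝ}
    {i₀ : ι} (hP : LinearIndependent ℝ fun i : {i // i ≠ i₀} => P i) (h₀ : q i₀ ≠ 0)
    (hne : ∀ i ≠ i₀, q i = 0) : LinearIndependent ℝ fun i => dgE (P i) (q i) := by
  refine linearIndependent_of_apply_eq_zero_of_ne (i₀ := i₀)
    (linearIndependent_dgE hP fun i => q i)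
    (entryLinearMap ℝ ℝ (Fin.last n) (Fin.last n)) ?_ fun i hi => ?_
  · simpa only [entryLinearMap_apply, dgE_last_last] using h₀
  · simpa only [entryLinearMap_apply, dgE_last_last] using hne i hi

end BlockDiagonal

section Border

variable {n : ℕ}

/-- `setBorder X x` is `X` with its last row and its last column, apart from the corner entry they
share, both replaced by `x`. It serves to prescribe the border of a symmetric matrix without
changing its trace pairing with block-diagonal matrices. -/
def setBorder (X : Mat (n + 1)) (x : Fin n → ℝ) : Mat (n + 1) :=
  let border : Fin (n + 1) → ℝ := Fin.snoc x (X (Fin.last n) (Fin.last n))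
  (X.updateRow (Fin.last n) border).updateCol (Fin.last n) border

theorem setBorder_castSucc_castSucc (X : Mat (n + 1)) (x : Fin n → ℝ) (i j : Fin n) :
    setBorder X x i.castSucc j.castSucc = X i.castSucc j.castSucc := by
  simp [setBorder, updateRow_apply]

theorem setBorder_castSucc_last (X : Mat (n + 1)) (x : Fin n → ℝ) (i : Fin n) :
    setBorder X x i.castSucc (Fin.last n) = x i := by
  simp [setBorder]

theorem setBorder_last_castSucc (X : Mat (n + 1)) (x : Fin n → ℝ) (j : Fin n) :
    setBorder X x (Fin.last n) j.castSucc = x j := by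
  simp [setBorder]

theorem setBorder_last_last (X : Mat (n + 1)) (x : Fin n → ℝ) :
    setBorder X x (Fin.last n) (Fin.last n) = X (Fin.last n) (Fin.last n) := by
  simp [setBorder]

theorem isSymm_setBorder {X : Mat (n + 1)} (hX : X.IsSymm) (x : Fin n → ℝ) :
    (setBorder X x).IsSymm := by
  refine IsSymm.ext fun i j => ?_
  cases i using Fin.lastCases <;> cases j using Fin.lastCases <;>
    simp only [setBorder_castSucc_castSucc, setBorder_castSucc_last, setBorder_last_castSucc,
      hX.apply]

theorem trace_dgE_mul_setBorder (P : Mat n) (q : ℝ) (X : Mat (n + 1)) (x : Fin n → ℝ) :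
    (dgE P q * setBorder X x).trace = (dgE P q * X).trace := by
  have hblock : (setBorder X x).submatrix Fin.castSucc Fin.castSucc =
      X.submatrix Fin.castSucc Fin.castSucc :=
    Matrix.ext (setBorder_castSucc_castSucc X x)
  rw [trace_dgE_mul, trace_dgE_mul, hblock, setBorder_last_last]

end Border

theorem sSDLCP_map_surjective_general {n m k : ℕ} {A : Fin m → Mat n} {b : Fin m → ℝ}
    {B : Fin k → Mat n} {d : Fin k → ℝ} (hAsymm : ∀ i, (A i).IsSymm) (hBsymm : ∀ j, (B j).IsSymm)
    (hAb : LinearIndependent ℝ fun i => dgE (A i) (-(b i)))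
    (hBd : LinearIndependent ℝ fun j => dgE (B j) (d j)) (r : SIdx n m k → ℝ) :
    ∃ Xh Yh : Mat (n + 1), Xh.IsSymm ∧ Yh.IsSymm ∧
      ∀ idx, Ahat A b Xh idx + Bhat B d Yh idx = r idx := by
  obtain ⟨X, hX, hXr⟩ := exists_isSymm_trace_mul_eq
    (fun i => isSymm_dgE (hAsymm i) _) hAb fun i => r (.inl i)
  obtain ⟨Y, hY, hYr⟩ := exists_isSymm_trace_mul_eq
    (fun j => isSymm_dgE (hBsymm j) _) hBd fun j => r (.inr (.inr j))
  refine ⟨setBorder X fun i => r (.inr (.inl i)), Y, isSymm_setBorder hX _, hY, ?_⟩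
  rintro (i | i | j)
  · simp only [Ahat, Bhat, trace_dgE_mul_setBorder, hXr, add_zero]
  · simp only [Ahat, Bhat, setBorder_castSucc_last, add_zero]
  · simp only [Ahat, Bhat, hYr, zero_add]

/-- The linear map `(X̂, Ŷ) ↦ Â(X̂) + B̂(Ŷ)` from `S^{n+1} × S^{n+1}`
to `ℝ^{ñ₁}` is surjective.  (Here `ñ` is written `nt`; `B j` denotes `B_{j+1}`, so
`B 0 = B₁`, and `d = (d₁, 0, …, 0)`.) -/
theorem sSDLCP_map_surjective
    (n m nt : ℕ) (hm1 : 1 ≤ m) (hmn : m ≤ nt) (hnt : nt = n * (n + 1) / 2)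
    (A : Fin m → Mat n) (b : Fin m → ℝ)
    (B : Fin (nt - m + 1) → Mat n) (d1 : ℝ)
    (hAsymm : ∀ i, (A i).IsSymm) (hAli : LinearIndependent ℝ A)
    (hBsymm : ∀ j, (B j).IsSymm)
    (hd1 : d1 ≠ 0)
    (hB1A : ∀ i, -(d1 * b i) + (B 0 * A i).trace = 0)
    (hBli : LinearIndependent ℝ (fun j : {j : Fin (nt - m + 1) // j ≠ 0} => B j.1))
    (hBspan : ∀ W : Mat n,
        W ∈ Submodule.span ℝ (B '' {j | j ≠ 0}) ↔
          (W.IsSymm ∧ ∀ i, (W * A i).trace = 0))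
    :
    ∀ r : SIdx n m (nt - m + 1) → ℝ,
      ∃ Xh Yh : Mat (n + 1), Xh.IsSymm ∧ Yh.IsSymm ∧
        ∀ idx, Ahat A b Xh idx +
            Bhat B (fun j => if j = 0 then d1 else 0) Yh idx = r idx :=
  sSDLCP_map_surjective_general hAsymm hBsymm (linearIndependent_dgE hAli _) <|
    linearIndependent_dgE_of_corner_eq_zero_of_ne hBli (by simpa using hd1) fun _ hj => if_neg hj

end
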